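/- Let n, m, k, ℓ, N ∈ ℕ with n + m = k + ℓ = N, and let r ∈ ℕ satisfy max(0, n−ℓ) ≤ r ≤ min(n, k). Define w_r ∈ S_N by: w_r(i) = i for 1 ≤ i ≤ r; w_r(i) = i − r + k for r < i ≤ n; w_r(i) = i − n + r for n < i ≤ n + k − r; and w_r(i) = i for n + k − r < i ≤ N. Then in the Hecke-like algebra B_N the following relations hold: T_{w_r} T_i = T_i T_{w_r} whenever 1 ≤ i < r or n + k − r < i < N; T_{w_r} T_i = T_{i−r+k} T_{w_r} whenever r < i < n; and T_{w_r} T_i = T_{i−n+r} T_{w_r} whenever n < i < n + k − r. -/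

import Mathlib

open scoped TensorProduct

namespace HeckeLikeTower

variable (F : Type*) [Field F]

/-- The defining relations of the Hecke-like algebra of degree `n` over `F` with parameters
`c, d`.  The generators `T_1, …, T_{n-1}` are indexed by `Fin (n-1)`, where the index
`i : Fin (n-1)` corresponds to the generator `T_{i+1}`. -/
inductive Rel (c d : F) (n : ℕ) :
    FreeAlgebra F (Fin (n - 1)) → FreeAlgebra F (Fin (n - 1)) → Prop
  | comm (i j : Fin (n - 1)) (h : (i : ℕ) + 1 < (j : ℕ)) :
      Rel c d n (FreeAlgebra.ι F i * FreeAlgebra.ι F j)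
        (FreeAlgebra.ι F j * FreeAlgebra.ι F i)
  | braid (i j : Fin (n - 1)) (h : (j : ℕ) = (i : ℕ) + 1) :
      Rel c d n (FreeAlgebra.ι F i * FreeAlgebra.ι F j * FreeAlgebra.ι F i)
        (FreeAlgebra.ι F j * FreeAlgebra.ι F i * FreeAlgebra.ι F j)
  | quad (i : Fin (n - 1)) :
      Rel c d n (FreeAlgebra.ι F i * FreeAlgebra.ι F i)
        (c • FreeAlgebra.ι F i + algebraMap F (FreeAlgebra F (Fin (n - 1))) d)

/-- The Hecke-like algebra `B_n` of degree `n` over `F` with parameters `c, d`: the quotient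
of the free associative unital `F`-algebra on `T_1, …, T_{n-1}` by the two-sided ideal
generated by the relations. -/
abbrev B (c d : F) (n : ℕ) : Type _ := RingQuot (Rel F c d n)

/-- The generator `T_{i+1}` of the Hecke-like algebra `B_n` (for `i : Fin (n-1)`). -/
def T (c d : F) (n : ℕ) (i : Fin (n - 1)) : B F c d n :=
  RingQuot.mkAlgHom F (Rel F c d n) (FreeAlgebra.ι F i)

/-- The adjacent transposition `s_{i+1} = (i+1, i+2) ∈ S_n` (for `i : Fin (n-1)`), acting on
`Fin n` by swapping `i` and `i+1` (`0`-based). -/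
def s (n : ℕ) (i : Fin (n - 1)) : Equiv.Perm (Fin n) :=
  Equiv.swap ⟨(i : ℕ), lt_of_lt_of_le i.isLt (Nat.sub_le n 1)⟩
    ⟨(i : ℕ) + 1, by have := i.isLt; omega⟩

/-- The product in `S_n` of the adjacent transpositions along a word. -/
def wordProd (n : ℕ) (l : List (Fin (n - 1))) : Equiv.Perm (Fin n) :=
  (l.map (s n)).prod

/-- The product `T_{i_1} ⋯ T_{i_r}` in `B_n` along a word `(i_1, …, i_r)`. -/
def Tword (c d : F) (n : ℕ) (l : List (Fin (n - 1))) : B F c d n :=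
  (l.map (T F c d n)).prod

/-- `l` is a reduced word for the permutation `w ∈ S_n`: the corresponding product of
adjacent transpositions is `w`, and `l` has minimal length among all such words (its length
is then the Coxeter length `ℓ(w)`). -/
def IsReducedWord (n : ℕ) (w : Equiv.Perm (Fin n)) (l : List (Fin (n - 1))) : Prop :=
  wordProd n l = w ∧
    ∀ l' : List (Fin (n - 1)), wordProd n l' = w → l.length ≤ l'.length

/-- The Coxeter length `ℓ(w)` of `w ∈ S_n` with respect to the adjacent transpositions. -/
noncomputable def len (n : ℕ) (w : Equiv.Perm (Fin n)) : ℕ :=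
  sInf {r | ∃ l : List (Fin (n - 1)), wordProd n l = w ∧ l.length = r}

end HeckeLikeTower

open HeckeLikeTower

namespace HeckeLikeTower

/-- The position `a` (0-based) in `Fin N`. -/
def lo (N : ℕ) (a : Fin (N - 1)) : Fin N := ⟨(a : ℕ), lt_of_lt_of_le a.isLt (Nat.sub_le N 1)⟩

/-- The position `a + 1` (0-based) in `Fin N`. -/
def hi (N : ℕ) (a : Fin (N - 1)) : Fin N := ⟨(a : ℕ) + 1, by have := a.isLt; omega⟩

lemma s_eq (N : ℕ) (a : Fin (N - 1)) : s N a = Equiv.swap (lo N a) (hi N a) := rfl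

lemma s_lo (N : ℕ) (a : Fin (N - 1)) : s N a (lo N a) = hi N a := by simp [s_eq]

lemma s_hi (N : ℕ) (a : Fin (N - 1)) : s N a (hi N a) = lo N a := by simp [s_eq]

lemma s_ne (N : ℕ) (a : Fin (N - 1)) (x : Fin N) (h1 : (x : ℕ) ≠ a) (h2 : (x : ℕ) ≠ a + 1) :
    s N a x = x := by
  rw [s_eq]
  apply Equiv.swap_apply_of_ne_of_ne
  · intro h; apply h1; rw [h]; rfl
  · intro h; apply h2; rw [h]; rfl

lemma s_mul_self (N : ℕ) (a : Fin (N - 1)) : s N a * s N a = 1 := by simp [s_eq]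

lemma s_inv (N : ℕ) (a : Fin (N - 1)) : (s N a)⁻¹ = s N a := by simp [s_eq]

lemma s_s (N : ℕ) (a : Fin (N - 1)) (x : Fin N) : s N a (s N a x) = x := by simp [s_eq]

/-- The value of `s_a x`. -/
lemma s_val (N : ℕ) (a : Fin (N - 1)) (x : Fin N) :
    ((s N a x : Fin N) : ℕ) =
      if (x : ℕ) = a then (a : ℕ) + 1 else if (x : ℕ) = a + 1 then (a : ℕ) else x := by
  split_ifs with h1 h2
  · have : x = lo N a := Fin.ext h1
    rw [this, s_lo]; rfl
  · have : x = hi N a := Fin.ext h2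
    rw [this, s_hi]; rfl
  · rw [s_ne N a x h1 h2]

lemma s_comm (N : ℕ) (a b : Fin (N - 1)) (h : (a : ℕ) + 1 < b) :
    s N a * s N b = s N b * s N a := by
  ext x
  simp only [Equiv.Perm.mul_apply, s_val]
  split_ifs <;> omega

lemma s_braid (N : ℕ) (a b : Fin (N - 1)) (h : (b : ℕ) = a + 1) :
    s N a * s N b * s N a = s N b * s N a * s N b := by
  have hlo : lo N b = hi N a := Fin.ext h
  have sbl : s N a (hi N b) = hi N b := s_ne _ _ _ (by simp [hi]; omega) (by simp [hi]; omega)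
  have sal : s N b (lo N a) = lo N a := s_ne _ _ _ (by simp [lo]; omega) (by simp [lo]; omega)
  have e1 : s N a * s N b = Equiv.swap (lo N a) (hi N b) * s N a := by
    rw [s_eq N b, Equiv.mul_swap_eq_swap_mul, sbl, hlo, s_hi]
  have e2 : s N b * s N a = Equiv.swap (lo N a) (hi N b) * s N b := by
    rw [s_eq N a, Equiv.mul_swap_eq_swap_mul, sal, ← hlo, s_lo]
  rw [e1, e2, mul_assoc, mul_assoc, s_mul_self, s_mul_self]

/-- The set of inversions of a permutation. -/
def Inv (N : ℕ) (v : Equiv.Perm (Fin N)) : Finset (Fin N × Fin N) :=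
  Finset.univ.filter fun p => p.1 < p.2 ∧ v p.2 < v p.1

lemma mem_Inv (N : ℕ) (v : Equiv.Perm (Fin N)) (p : Fin N × Fin N) :
    p ∈ Inv N v ↔ p.1 < p.2 ∧ v p.2 < v p.1 := by simp [Inv]

lemma s_lt (N : ℕ) (a : Fin (N - 1)) (x y : Fin N) (h : x < y)
    (hne : ¬ (x = lo N a ∧ y = hi N a)) : s N a x < s N a y := by
  have hne' : ¬ ((x : ℕ) = a ∧ (y : ℕ) = a + 1) := fun ⟨h1, h2⟩ =>
    hne ⟨Fin.ext h1, Fin.ext h2⟩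
  rw [Fin.lt_def] at h ⊢
  rw [s_val, s_val]
  split_ifs <;> omega

/-- Number of inversions of `w` (counted via values, i.e. for `w⁻¹`). -/
def inv (N : ℕ) (w : Equiv.Perm (Fin N)) : ℕ := (Inv N w⁻¹).card

lemma Inv_mul (N : ℕ) (v : Equiv.Perm (Fin N)) (a : Fin (N - 1)) (h : v (lo N a) < v (hi N a)) :
    Inv N (v * s N a) = insert (lo N a, hi N a)
      ((Inv N v).image (Prod.map (s N a) (s N a))) := by
  ext ⟨x, y⟩
  rw [mem_Inv, Finset.mem_insert, Finset.mem_image]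
  constructor
  · rintro ⟨h1, h2⟩
    by_cases hxy : x = lo N a ∧ y = hi N a
    · left; rw [hxy.1, hxy.2]
    · right
      exact ⟨(s N a x, s N a y), (mem_Inv _ _ _).2 ⟨s_lt N a x y h1 hxy, h2⟩, by simp [s_s]⟩
  · rintro (h1 | ⟨⟨p, q⟩, hp, hpq⟩)
    · obtain ⟨rfl, rfl⟩ := Prod.mk.inj h1
      refine ⟨?_, ?_⟩
      · simp [lo, hi]
      · simpa [s_lo, s_hi] using h
    · obtain ⟨rfl, rfl⟩ := Prod.mk.inj hpq
      rw [mem_Inv] at hp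
      refine ⟨s_lt N a p q hp.1 ?_, by simpa [s_s] using hp.2⟩
      rintro ⟨rfl, rfl⟩
      exact absurd hp.2 (not_lt.2 h.le)

lemma lo_lt_hi (N : ℕ) (a : Fin (N - 1)) : lo N a < hi N a := by simp [lo, hi]

lemma inv_asc (N : ℕ) (w : Equiv.Perm (Fin N)) (a : Fin (N - 1))
    (h : w⁻¹ (lo N a) < w⁻¹ (hi N a)) : inv N (s N a * w) = inv N w + 1 := by
  unfold inv
  rw [mul_inv_rev, s_inv, Inv_mul N _ a h, Finset.card_insert_of_notMem,
    Finset.card_image_of_injective]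
  · exact Function.Injective.prodMap (s N a).injective (s N a).injective
  · rw [Finset.mem_image]
    rintro ⟨⟨p, q⟩, hp, hpq⟩
    obtain ⟨h1, h2⟩ := Prod.mk.inj hpq
    have h1' : p = hi N a := by rw [← s_lo, ← h1, s_s]
    have h2' : q = lo N a := by rw [← s_hi, ← h2, s_s]
    rw [mem_Inv] at hp
    rw [h1', h2'] at hp
    exact absurd hp.1 (not_lt.2 (lo_lt_hi N a).le)

lemma s_mul_s_mul (N : ℕ) (w : Equiv.Perm (Fin N)) (a : Fin (N - 1)) :
    s N a * (s N a * w) = w := by rw [← mul_assoc, s_mul_self, one_mul]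

lemma inv_desc (N : ℕ) (w : Equiv.Perm (Fin N)) (a : Fin (N - 1))
    (h : w⁻¹ (hi N a) < w⁻¹ (lo N a)) : inv N (s N a * w) + 1 = inv N w := by
  have := inv_asc N (s N a * w) a (by
    rw [mul_inv_rev, s_inv, Equiv.Perm.mul_apply, Equiv.Perm.mul_apply, s_lo, s_hi]; exact h)
  rw [s_mul_s_mul] at this
  exact this.symm

lemma asc_or_desc (N : ℕ) (w : Equiv.Perm (Fin N)) (a : Fin (N - 1)) :
    w⁻¹ (lo N a) < w⁻¹ (hi N a) ∨ w⁻¹ (hi N a) < w⁻¹ (lo N a) := by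
  rcases lt_trichotomy (w⁻¹ (lo N a)) (w⁻¹ (hi N a)) with h | h | h
  · exact Or.inl h
  · exact absurd (w⁻¹.injective h) (lo_lt_hi N a).ne
  · exact Or.inr h

lemma eq_one_of_asc (N : ℕ) (v : Equiv.Perm (Fin N))
    (h : ∀ a : Fin (N - 1), v (lo N a) < v (hi N a)) : v = 1 := by
  cases N with
  | zero => exact Subsingleton.elim _ _
  | succ n =>
    have hm : StrictMono v := by
      rw [Fin.strictMono_iff_lt_succ]
      intro i
      exact h i
    have : hm.orderIsoOfSurjective v v.surjective = OrderIso.refl _ := Subsingleton.elim _ _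
    ext x
    have h2 := congrArg (fun e : Fin (n + 1) ≃o Fin (n + 1) => ((e x : Fin (n + 1)) : ℕ)) this
    simpa using h2

lemma exists_word (N : ℕ) : ∀ (L : ℕ) (w : Equiv.Perm (Fin N)), inv N w = L →
    ∃ l : List (Fin (N - 1)), wordProd N l = w ∧ l.length = L := by
  intro L
  induction L with
  | zero =>
    intro w hw
    refine ⟨[], ?_, rfl⟩
    have : w⁻¹ = 1 := by
      apply eq_one_of_asc
      intro a
      rcases asc_or_desc N w a with h | h
      · exact h
      · have := inv_desc N w a h
        omega
    rw [inv_eq_one] at this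
    simp [wordProd, this]
  | succ L ih =>
    intro w hw
    by_cases hd : ∃ a, w⁻¹ (hi N a) < w⁻¹ (lo N a)
    · obtain ⟨a, ha⟩ := hd
      have h1 := inv_desc N w a ha
      obtain ⟨l, hl, hl2⟩ := ih (s N a * w) (by omega)
      refine ⟨a :: l, ?_, by simp [hl2]⟩
      have : wordProd N (a :: l) = s N a * wordProd N l := by simp [wordProd]
      rw [this, hl, s_mul_s_mul]
    · exfalso
      have : w⁻¹ = 1 := by
        apply eq_one_of_asc
        intro a
        rcases asc_or_desc N w a with h | h
        · exact h
        · exact absurd ⟨a, h⟩ hd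
      unfold inv at hw
      rw [this] at hw
      have h0 : Inv N (1 : Equiv.Perm (Fin N)) = ∅ := by
        ext p
        rw [mem_Inv]
        simp
        exact fun h => h.le
      rw [h0] at hw
      simp at hw

lemma wordProd_cons (N : ℕ) (a : Fin (N - 1)) (l : List (Fin (N - 1))) :
    wordProd N (a :: l) = s N a * wordProd N l := by simp [wordProd]

lemma inv_one (N : ℕ) : inv N 1 = 0 := by
  unfold inv
  rw [Finset.card_eq_zero]
  ext p
  rw [mem_Inv]
  simp
  exact fun h => h.le

lemma inv_word_le (N : ℕ) (l : List (Fin (N - 1))) : inv N (wordProd N l) ≤ l.length := by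
  induction l with
  | nil => simp [wordProd, inv_one]
  | cons a l ih =>
    rw [wordProd_cons, List.length_cons]
    rcases asc_or_desc N (wordProd N l) a with h | h
    · have := inv_asc _ _ _ h
      omega
    · have := inv_desc _ _ _ h
      omega

section alg
variable (F : Type*) [Field F] (c d : F) (N : ℕ)

lemma T_comm (a b : Fin (N - 1)) (h : (a : ℕ) + 1 < b) :
    T F c d N a * T F c d N b = T F c d N b * T F c d N a := by
  have := RingQuot.mkAlgHom_rel F (Rel.comm (c := c) (d := d) a b h)
  simpa [T] using this

lemma T_braid (a b : Fin (N - 1)) (h : (b : ℕ) = a + 1) :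
    T F c d N a * T F c d N b * T F c d N a = T F c d N b * T F c d N a * T F c d N b := by
  have := RingQuot.mkAlgHom_rel F (Rel.braid (c := c) (d := d) a b h)
  simpa [T] using this

lemma Tword_cons (a : Fin (N - 1)) (l : List (Fin (N - 1))) :
    Tword F c d N (a :: l) = T F c d N a * Tword F c d N l := by simp [Tword]

/-- If `a :: u` has as many letters as inversions, then so does `u`, and `a` is a descent. -/
lemma red_tail (a : Fin (N - 1)) (u : List (Fin (N - 1))) (w : Equiv.Perm (Fin N))
    (hp : wordProd N (a :: u) = w) (hi' : inv N w = u.length + 1) :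
    wordProd N u = s N a * w ∧ inv N (s N a * w) = u.length ∧
      w⁻¹ (hi N a) < w⁻¹ (lo N a) := by
  have h1 : wordProd N u = s N a * w := by
    rw [← hp, wordProd_cons, s_mul_s_mul]
  have h2 := inv_word_le N u
  rw [h1] at h2
  rcases asc_or_desc N w a with h | h
  · have := inv_asc _ _ _ h
    omega
  · have := inv_desc _ _ _ h
    exact ⟨h1, by omega, h⟩

/-- Matsumoto's theorem for the Hecke-like algebra. -/
lemma matsumoto : ∀ (L : ℕ) (w : Equiv.Perm (Fin N)) (l l' : List (Fin (N - 1))),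
    inv N w = L → wordProd N l = w → wordProd N l' = w → l.length = L → l'.length = L →
    Tword F c d N l = Tword F c d N l' := by
  intro L
  induction L with
  | zero =>
    intro w l l' _ _ _ h1 h2
    rw [List.length_eq_zero_iff] at h1 h2
    rw [h1, h2]
  | succ L ih =>
    -- the ordered case
    have key : ∀ (w : Equiv.Perm (Fin N)) (a b : Fin (N - 1)) (u v : List (Fin (N - 1))),
        (a : ℕ) < b → inv N w = L + 1 → wordProd N (a :: u) = w → wordProd N (b :: v) = w →
        u.length = L → v.length = L →
        Tword F c d N (a :: u) = Tword F c d N (b :: v) := by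
      intro w a b u v hab hw hu hv hul hvl
      obtain ⟨hu1, hu2, hu3⟩ := red_tail N a u w hu (by omega)
      obtain ⟨hv1, hv2, hv3⟩ := red_tail N b v w hv (by omega)
      rw [hul] at hu2
      rw [hvl] at hv2
      rw [Tword_cons, Tword_cons]
      by_cases hb : (b : ℕ) = a + 1
      · have hlo : lo N b = hi N a := Fin.ext hb
        have sbl : s N a (hi N b) = hi N b := s_ne _ _ _ (by simp [hi]; omega) (by simp [hi]; omega)
        have sal : s N b (lo N a) = lo N a := s_ne _ _ _ (by simp [lo]; omega) (by simp [lo]; omega)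
        have d1 := inv_desc N (s N a * w) b (by
          rw [mul_inv_rev, s_inv, Equiv.Perm.mul_apply, Equiv.Perm.mul_apply, sbl, hlo, s_hi]
          rw [hlo] at hv3
          exact hv3.trans hu3)
        have d2 := inv_desc N (s N b * (s N a * w)) a (by
          rw [mul_inv_rev, mul_inv_rev, s_inv, s_inv]
          simp only [Equiv.Perm.mul_apply]
          rw [sal, s_lo, ← hlo, s_lo, sbl, hlo]
          rw [hlo] at hv3
          exact hv3)
        obtain ⟨x, hx, hxl⟩ := exists_word N _ (s N a * (s N b * (s N a * w))) rfl
        have e1 : Tword F c d N u = Tword F c d N (b :: a :: x) := by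
          apply ih (s N a * w) _ _ hu2 hu1 _ hul
          · simp only [List.length_cons]; omega
          · rw [wordProd_cons, wordProd_cons, hx, s_mul_s_mul, s_mul_s_mul]
        have e2 : Tword F c d N v = Tword F c d N (a :: b :: x) := by
          apply ih (s N b * w) _ _ hv2 hv1 _ hvl
          · simp only [List.length_cons]; omega
          · rw [wordProd_cons, wordProd_cons, hx]
            have : s N a * (s N b * (s N a * w)) = s N b * (s N a * (s N b * w)) := by
              have := congrArg (· * w) (s_braid N a b hb)
              simpa [mul_assoc] using this
            rw [this, s_mul_s_mul, s_mul_s_mul]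
        rw [e1, e2]
        simp only [Tword_cons, ← mul_assoc]
        rw [T_braid F c d N a b hb]
      · have hb' : (a : ℕ) + 1 < b := by omega
        have d1 := inv_desc N (s N a * w) b (by
          rw [mul_inv_rev, s_inv, Equiv.Perm.mul_apply, Equiv.Perm.mul_apply,
            s_ne N a (hi N b) (by simp [hi]; omega) (by simp [hi]; omega),
            s_ne N a (lo N b) (by simp [lo]; omega) (by simp [lo]; omega)]
          exact hv3)
        obtain ⟨x, hx, hxl⟩ := exists_word N _ (s N b * (s N a * w)) rfl
        have e1 : Tword F c d N u = Tword F c d N (b :: x) := by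
          apply ih (s N a * w) _ _ hu2 hu1 _ hul
          · simp only [List.length_cons]; omega
          · rw [wordProd_cons, hx, s_mul_s_mul]
        have e2 : Tword F c d N v = Tword F c d N (a :: x) := by
          apply ih (s N b * w) _ _ hv2 hv1 _ hvl
          · simp only [List.length_cons]; omega
          · rw [wordProd_cons, hx, ← mul_assoc (s N b), ← s_comm N a b hb', mul_assoc,
              s_mul_s_mul]
        rw [e1, e2]
        simp only [Tword_cons, ← mul_assoc]
        rw [T_comm F c d N a b hb']
    intro w l l' hw hl hl' h1 h2
    obtain ⟨a, u, rfl⟩ := List.exists_cons_of_length_eq_add_one h1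
    obtain ⟨b, v, rfl⟩ := List.exists_cons_of_length_eq_add_one h2
    simp only [List.length_cons, add_left_inj] at h1 h2
    rcases lt_trichotomy (a : ℕ) b with hab | hab | hab
    · exact key w a b u v hab hw hl hl' h1 h2
    · obtain rfl : a = b := Fin.ext hab
      obtain ⟨hu1, hu2, hu3⟩ := red_tail N a u w hl (by omega)
      obtain ⟨hv1, hv2, hv3⟩ := red_tail N a v w hl' (by omega)
      rw [Tword_cons, Tword_cons, ih (s N a * w) u v (by omega) hu1 hv1 h1 h2]
    · exact (key w b a v u hab hw hl' hl h2 h1).symm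

lemma red_length (w : Equiv.Perm (Fin N)) (l : List (Fin (N - 1))) (h : IsReducedWord N w l) :
    l.length = inv N w := by
  obtain ⟨x, hx, hxl⟩ := exists_word N _ w rfl
  have h1 := h.2 x hx
  have h2 := inv_word_le N l
  rw [h.1] at h2
  omega

/-- If `w` maps the adjacent pair at `j` to the adjacent pair at `p`, in order, then
`T_w T_j = T_p T_w`. -/
lemma Tword_mul_T (w : Equiv.Perm (Fin N)) (l : List (Fin (N - 1))) (h : IsReducedWord N w l)
    (j p : Fin (N - 1)) (h1 : ((w (lo N j) : Fin N) : ℕ) = p)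
    (h2 : ((w (hi N j) : Fin N) : ℕ) = p + 1) :
    Tword F c d N l * T F c d N j = T F c d N p * Tword F c d N l := by
  have h1' : w (lo N j) = lo N p := Fin.ext h1
  have h2' : w (hi N j) = hi N p := Fin.ext h2
  have hl := red_length N w l h
  have ha := inv_asc N w p (by
    rw [← h1', ← h2']
    simpa using lo_lt_hi N j)
  have hm : Tword F c d N (l ++ [j]) = Tword F c d N (p :: l) := by
    apply matsumoto F c d N (inv N w + 1) (s N p * w) _ _ ha
    · have : wordProd N (l ++ [j]) = wordProd N l * s N j := by simp [wordProd]
      rw [this, h.1, s_eq, s_eq, Equiv.mul_swap_eq_swap_mul, h1', h2']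
    · rw [wordProd_cons, h.1]
    · simp [hl]
    · simp [hl]
  rw [Tword_cons] at hm
  rw [← hm]
  simp [Tword]

end alg

end HeckeLikeTower

/-- let `n + m = k + l = N` and `max(0, n−l) ≤ r ≤ min(n, k)`, and let
`w_r ∈ S_N` be defined piecewise as in the paper (`0`-based here: `w i = i` for `i < r`;
`(w i) = i − r + k` for `r ≤ i < n`; `(w i) = i − n + r` for `n ≤ i < n + k − r`; `w i = i`
otherwise).  Then in `B_N`:
`T_{w_r} T_i = T_i T_{w_r}` for `1 ≤ i < r` or `n+k−r < i < N`;
`T_{w_r} T_i = T_{i−r+k} T_{w_r}` for `r < i < n`; and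
`T_{w_r} T_i = T_{i−n+r} T_{w_r}` for `n < i < n+k−r`.
(The generator `T_i`, `1 ≤ i ≤ N−1`, is `T F c d N j` with `i = j + 1`.) -/
theorem heckeLike_Twr_comm (F : Type*) [Field F] (c d : F) (n m k l N r : ℕ)
    (hnm : n + m = N) (hkl : k + l = N)
    (hr₁ : n - l ≤ r) (hr₂ : r ≤ n) (hr₃ : r ≤ k)
    (w : Equiv.Perm (Fin N))
    (hw : ∀ i : Fin N,
      ((i : ℕ) < r → w i = i) ∧
      (r ≤ (i : ℕ) → (i : ℕ) < n → ((w i : ℕ) = (i : ℕ) - r + k)) ∧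
      (n ≤ (i : ℕ) → (i : ℕ) < n + k - r → ((w i : ℕ) = (i : ℕ) - n + r)) ∧
      (n + k - r ≤ (i : ℕ) → w i = i))
    (lw : List (Fin (N - 1))) (hlw : IsReducedWord N w lw) :
    (∀ j : Fin (N - 1), (j : ℕ) + 1 < r ∨ n + k - r < (j : ℕ) + 1 →
      Tword F c d N lw * T F c d N j = T F c d N j * Tword F c d N lw) ∧
    (∀ (j : Fin (N - 1)) (hj₁ : r < (j : ℕ) + 1) (hj₂ : (j : ℕ) + 1 < n),
      Tword F c d N lw * T F c d N j =
        T F c d N ⟨(j : ℕ) + k - r, by have := j.isLt; omega⟩ * Tword F c d N lw) ∧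
    (∀ (j : Fin (N - 1)) (hj₁ : n < (j : ℕ) + 1) (hj₂ : (j : ℕ) + 1 < n + k - r),
      Tword F c d N lw * T F c d N j =
        T F c d N ⟨(j : ℕ) + r - n, by have := j.isLt; omega⟩ * Tword F c d N lw) := by
  refine ⟨?_, ?_, ?_⟩
  · intro j hj
    apply Tword_mul_T F c d N w lw hlw
    · rcases hj with hj | hj
      · rw [(hw (lo N j)).1 (by simp only [lo]; omega)]; rfl
      · rw [(hw (lo N j)).2.2.2 (by simp only [lo]; omega)]; rfl
    · rcases hj with hj | hj
      · rw [(hw (hi N j)).1 (by simp only [hi]; omega)]; rfl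
      · rw [(hw (hi N j)).2.2.2 (by simp only [hi]; omega)]; rfl
  · intro j hj₁ hj₂
    apply Tword_mul_T F c d N w lw hlw
    · rw [(hw (lo N j)).2.1 (by simp only [lo]; omega) (by simp only [lo]; omega)]
      simp only [lo]; omega
    · rw [(hw (hi N j)).2.1 (by simp only [hi]; omega) (by simp only [hi]; omega)]
      simp only [hi]; omega
  · intro j hj₁ hj₂
    apply Tword_mul_T F c d N w lw hlw
    · rw [(hw (lo N j)).2.2.1 (by simp only [lo]; omega) (by simp only [lo]; omega)]
      simp only [lo]; omega
    · rw [(hw (hi N j)).2.2.1 (by simp only [hi]; omega) (by simp only [hi]; omega)]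
      simp only [hi]; omega
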